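/- arXiv:1609.00265 — 2 statements merged into one kernel-verified Lean document; each statement's English description precedes it below -/
import Mathlib

section
/- Large matching of violations: let P be a finite partially ordered set, k ≥ 1 an integer, ε > 0 a real number, and f : P → {0,1} a function such that every k-monotone g : P → {0,1} differs from f on at least ε·|P| points. Then there exists a family of violating chains for (f,k) whose vertex sets (each of size k+1) are pairwise disjoint, and which contains at least ε·|P|/(k+1) chains. -/
/-!
Take a family `T` of violating chains with pairwise disjoint vertex sets that is maximal under
inclusion, and let `W` be the set of vertices it covers, so `|W| ≤ (k + 1) |T|`. By maximality no
violating chain of `(f, k)` avoids `W`. The restriction of `f` to the complement `S` of `W`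
therefore is `k`-monotone, and it extends to a `k`-monotone function `g` on all of `P`
(`exists_kMonotone_extension`). As `f` and `g` differ only on `W`, the distance hypothesis gives
`ε |P| ≤ |W| ≤ (k + 1) |T|`.

For the extension, let `L x` be the largest length of an alternating chain in `S`, starting with
value `1`, that lies below `x`. Then `L` is monotone and at most `k`, and `g x = 1` iff `L x` is
odd. On `S` this agrees with `f`, as otherwise `x` would prolong a longest chain. Along a violating
chain for `(g, k)` the parity of `L` changes at each step, so `L` increases strictly from a value
at least `1`, and exceeds `k` at the end.
-/


/-- A violating chain for `(f, k)`: a monotone sequence `x₁ ⪯ … ⪯ x_{k+1}` with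
`f(x₁) = 1` and alternating values along the chain. -/
def IsViolChain {α : Type*} [Preorder α] (f : α → Bool) (k : ℕ)
    (x : Fin (k + 1) → α) : Prop :=
  Monotone x ∧ f (x 0) = true ∧ ∀ i : Fin k, f (x i.castSucc) ≠ f (x i.succ)

/-- `f` is `k`-monotone: there is no violating chain for `(f, k)`. -/
def KMonotone {α : Type*} [Preorder α] (f : α → Bool) (k : ℕ) : Prop :=
  ¬ ∃ x : Fin (k + 1) → α, IsViolChain f k x

/-- `AltBelow f S n x`: there is an alternating chain of `n` points of `S`, starting with value
`true`, all of whose points are `⪯ x`. The recursion peels off the top point; counted from the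
bottom, the point of (zero-based) index `i` has value `true` iff `i` is even. -/
def AltBelow {P : Type*} [PartialOrder P] (f : P → Bool) (S : Set P) : ℕ → P → Prop
  | 0, _ => True
  | n + 1, x => ∃ y ≤ x, y ∈ S ∧ f y = decide (Even n) ∧ AltBelow f S n y

theorem AltBelow.mono {P : Type*} [PartialOrder P] {f : P → Bool} {S : Set P} {n : ℕ} {x y : P}
    (h : AltBelow f S n x) (hxy : x ≤ y) : AltBelow f S n y := by
  cases n with
  | zero => trivial
  | succ n =>
    obtain ⟨z, hz, h⟩ := h
    exact ⟨z, hz.trans hxy, h⟩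

/-- The chain behind `AltBelow`, as a sequence that becomes constant after its top point. -/
theorem AltBelow.exists_chain {P : Type*} [PartialOrder P] {f : P → Bool} {S : Set P} :
    ∀ {n : ℕ} {x : P}, AltBelow f S (n + 1) x →
      ∃ c : ℕ → P, Monotone c ∧ (∀ i, c i ≤ x ∧ c i ∈ S) ∧ ∀ i ≤ n, f (c i) = decide (Even i)
  | 0, x, ⟨y, hy, hS, hf, _⟩ => by
    refine ⟨fun _ => y, monotone_const, fun _ => ⟨hy, hS⟩, fun i hi => ?_⟩
    obtain rfl : i = 0 := by omega
    exact hf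
  | n + 1, x, ⟨y, hy, hS, hf, h⟩ => by
    obtain ⟨c, hc, hcx, hcf⟩ := h.exists_chain
    refine ⟨fun i => if i ≤ n then c i else y, ?_, ?_, ?_⟩
    · intro i j hij
      dsimp only
      split_ifs with h1 h2
      · exact hc hij
      · exact (hcx i).1
      · omega
      · exact le_rfl
    · intro i
      dsimp only
      split_ifs
      · exact ⟨(hcx i).1.trans hy, (hcx i).2⟩
      · exact ⟨hy, hS⟩
    · intro i hi
      dsimp only
      split_ifs with h1
      · exact hcf i h1
      · obtain rfl : i = n + 1 := by omega
        exact hf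

/-- If no violating chain lies inside `S`, then `f` restricted to `S` extends to a `k`-monotone
function on the whole poset. -/
theorem exists_kMonotone_extension {P : Type*} [PartialOrder P] (k : ℕ) (f : P → Bool) (S : Set P)
    (hS : ∀ c : Fin (k + 1) → P, IsViolChain f k c → ∃ i, c i ∉ S) :
    ∃ g : P → Bool, KMonotone g k ∧ ∀ x ∈ S, f x = g x := by
  classical
  have hno : ∀ x, ¬ AltBelow f S (k + 1) x := by
    intro x hx
    obtain ⟨c, hc, hcx, hcf⟩ := hx.exists_chain
    obtain ⟨i, hi⟩ := hS (fun i => c i) ⟨fun i j hij => hc hij, by simp [hcf], fun i => by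
      have h1 := hcf i (by omega)
      have h2 := hcf (i + 1) (by omega)
      by_cases h : Even (i : ℕ) <;> simp [h1, h2, Nat.even_add_one, -Nat.not_even_iff_odd, h]⟩
    exact hi (hcx _).2
  let L : P → ℕ := fun x => Nat.findGreatest (fun n => AltBelow f S n x) k
  have hLk : ∀ x, L x ≤ k := fun x => Nat.findGreatest_le k
  have hL : ∀ x, AltBelow f S (L x) x := fun x =>
    Nat.findGreatest_spec (P := fun n => AltBelow f S n x) (Nat.zero_le k) trivial
  have hLmono : Monotone L := fun x y hxy =>
    Nat.le_findGreatest (hLk x) ((hL x).mono hxy)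
  refine ⟨fun x => decide (¬ Even (L x)), ?_, ?_⟩
  · rintro ⟨c, hc, h0, halt⟩
    have key : ∀ n (hn : n < k + 1), n + 1 ≤ L (c ⟨n, hn⟩) := by
      intro n
      induction n with
      | zero =>
        intro hn
        have h0' : ¬ Even (L (c 0)) := by simpa using h0
        exact Nat.one_le_iff_ne_zero.2 fun h => h0' (by
          rw [show (0 : Fin (k + 1)) = ⟨0, hn⟩ from rfl, h]; exact Even.zero)
      | succ n ih =>
        intro hn
        have h1 := ih (by omega)
        have h2 := hLmono (hc (show (⟨n, by omega⟩ : Fin (k + 1)) ≤ ⟨n + 1, hn⟩ by simp))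
        have h3 : L (c ⟨n, by omega⟩) ≠ L (c ⟨n + 1, hn⟩) := by
          intro h
          exact halt ⟨n, by omega⟩ (by
            change decide (¬ Even (L (c ⟨n, by omega⟩))) = decide (¬ Even (L (c ⟨n + 1, hn⟩)))
            rw [h])
        omega
    have := key k (by omega)
    have := hLk (c ⟨k, by omega⟩)
    omega
  · intro x hx
    by_contra hne
    -- Otherwise `x` itself prolongs a longest chain below `x`.
    have hfx : f x = decide (Even (L x)) := by
      by_cases h : Even (L x) <;> simpa [h] using hne
    have hsucc : AltBelow f S (L x + 1) x := ⟨x, le_rfl, hx, hfx, hL x⟩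
    rcases (hLk x).lt_or_eq with h | h
    · have : L x + 1 ≤ L x := Nat.le_findGreatest (P := fun n => AltBelow f S n x) h hsucc
      omega
    · rw [h] at hsucc
      exact hno x hsucc

/-- A function far from `k`-monotone has a large matching of violating chains with
pairwise disjoint vertex sets. -/
theorem large_matching_of_violations {P : Type*} [PartialOrder P] [Fintype P]
    (k : ℕ) (hk : 1 ≤ k) (ε : ℝ) (hε : 0 < ε) (f : P → Bool)
    (hfar : ∀ g : P → Bool, KMonotone g k →
      (ε * Fintype.card P : ℝ) ≤ (Finset.univ.filter (fun x => f x ≠ g x)).card) :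
    ∃ T : Finset (Fin (k + 1) → P),
      (∀ x ∈ T, IsViolChain f k x) ∧
      (∀ x ∈ T, ∀ y ∈ T, x ≠ y → Disjoint (Set.range x) (Set.range y)) ∧
      (ε * Fintype.card P / (k + 1) : ℝ) ≤ T.card := by
  classical
  obtain ⟨T, -, hT⟩ := Finite.exists_le_maximal
    (p := fun T : Finset (Fin (k + 1) → P) => (∀ x ∈ T, IsViolChain f k x) ∧
      (∀ x ∈ T, ∀ y ∈ T, x ≠ y → Disjoint (Set.range x) (Set.range y)))
    (a := ∅) (by simp)
  refine ⟨T, hT.prop.1, hT.prop.2, ?_⟩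
  let W : Finset P := T.biUnion fun x => Finset.univ.image x
  have hWcard : W.card ≤ T.card * (k + 1) :=
    Finset.card_biUnion_le_card_mul _ _ _ fun x _ =>
      Finset.card_image_le.trans (by simp)
  have hmem : ∀ x ∈ T, ∀ i, x i ∈ W := fun x hx i =>
    Finset.mem_biUnion.2 ⟨x, hx, Finset.mem_image_of_mem _ (Finset.mem_univ i)⟩
  obtain ⟨g, hg, hfg⟩ := exists_kMonotone_extension k f {p | p ∉ W} (by
    intro c hc
    by_contra! hcW
    have hdis : ∀ x ∈ T, Disjoint (Set.range x) (Set.range c) := by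
      intro x hx
      rw [Set.disjoint_left]
      rintro _ ⟨i, rfl⟩ ⟨j, hj⟩
      exact hcW j (hj ▸ hmem x hx i)
    have hins : insert c T ≤ T := hT.le_of_ge (by
      refine ⟨?_, ?_⟩
      · intro x hx
        rcases Finset.mem_insert.1 hx with rfl | hx
        · exact hc
        · exact hT.prop.1 x hx
      · intro x hx y hy hxy
        rcases Finset.mem_insert.1 hx with rfl | hxT <;>
          rcases Finset.mem_insert.1 hy with rfl | hyT
        · exact absurd rfl hxy
        · exact (hdis y hyT).symm
        · exact hdis x hxT
        · exact hT.prop.2 x hxT y hyT hxy) (Finset.subset_insert c T)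
    exact hcW 0 (hmem c (hins (Finset.mem_insert_self c T)) 0))
  have hsub : Finset.univ.filter (fun x => f x ≠ g x) ⊆ W := by
    intro x hx
    by_contra hxW
    exact (Finset.mem_filter.1 hx).2 (hfg x hxW)
  have hle : (Finset.univ.filter (fun x => f x ≠ g x)).card ≤ T.card * (k + 1) :=
    (Finset.card_le_card hsub).trans hWcard
  rw [div_le_iff₀ (by positivity)]
  exact (hfar g hg).trans (by exact_mod_cast hle)
end

section
/- Let n, k ≥ 1 be integers and ε ∈ (0,1] a real, and let f : {1,…,n} → {0,1} be such that every k-monotone g : {1,…,n} → {0,1} differs from f on at least ε·n points. Then f is not ⌊(1 + ε/4)·k⌋-monotone; that is, there exists a chain x₁ ≤ x₂ ≤ ⋯ ≤ x_{ℓ+1} in {1,…,n}, with ℓ = ⌊(1 + ε/4)·k⌋, such that f(x₁) = 1 and f(xᵢ) ≠ f(xᵢ₊₁) for all 1 ≤ i ≤ ℓ. -/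
/-- `f` is `k`-monotone on `S`: there is no violating chain for `(f, k)` inside `S`. -/
def KMonotoneOn {α : Type*} [Preorder α] (f : α → Bool) (k : ℕ) (S : Set α) : Prop :=
  ¬ ∃ x : Fin (k + 1) → α, (∀ i, x i ∈ S) ∧ IsViolChain f k x

/-- The index of the block of constancy of `f` on `{1, 2, …}` containing `x`; an initial block of
zeros has index `0` and the first block of ones has index `1`. The value at `0` is set to `0`, so
that `f 0` plays no role. -/
def blockIdx (f : ℕ → Bool) : ℕ → ℕ
  | 0 => 0
  | x + 1 => blockIdx f x + if f (x + 1) = decide (blockIdx f x % 2 = 1) then 0 else 1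

lemma blockIdx_mono (f : ℕ → Bool) : Monotone (blockIdx f) :=
  monotone_nat_of_le_succ fun x => by simp [blockIdx]

lemma eq_parity_blockIdx (f : ℕ → Bool) {x : ℕ} (hx : 1 ≤ x) :
    f x = decide (blockIdx f x % 2 = 1) := by
  obtain ⟨y, rfl⟩ : ∃ y, x = y + 1 := ⟨x - 1, by omega⟩
  rw [blockIdx]
  split_ifs with h
  · simpa using h
  · have h2 : (blockIdx f y + 1) % 2 = 1 ↔ ¬ blockIdx f y % 2 = 1 := by omega
    cases hf : f (y + 1) <;> simp_all

/-- Block indices grow by at most one at each step, so none is skipped. -/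
lemma exists_blockIdx_eq (f : ℕ → Bool) (n i : ℕ) (hi : i ≤ blockIdx f n) :
    ∃ x ≤ n, blockIdx f x = i := by
  induction n with
  | zero => exact ⟨0, le_rfl, by simp [blockIdx] at hi ⊢; omega⟩
  | succ n ih =>
    by_cases h : i ≤ blockIdx f n
    · obtain ⟨x, hx, hxi⟩ := ih h
      exact ⟨x, by omega, hxi⟩
    · refine ⟨n + 1, le_rfl, ?_⟩
      rw [blockIdx] at hi ⊢
      split_ifs at hi ⊢ <;> omega

/-- One point from each of the blocks `1, …, l + 1` forms a violating chain. -/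
lemma exists_chain (f : ℕ → Bool) (n l : ℕ) (h : l < blockIdx f n) :
    ∃ x : Fin (l + 1) → ℕ, (∀ i, x i ∈ Set.Icc 1 n) ∧ IsViolChain f l x := by
  have key : ∀ i : Fin (l + 1), ∃ x ≤ n, blockIdx f x = i + 1 := fun i =>
    exists_blockIdx_eq f n _ (by omega)
  choose x hxn hx using key
  have hx1 : ∀ i, 1 ≤ x i := fun i => by
    by_contra h0
    have h1 := hx i
    rw [show x i = 0 by omega, blockIdx] at h1
    omega
  refine ⟨x, fun i => ⟨hx1 i, hxn i⟩, fun i j hij => ?_, ?_, fun i => ?_⟩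
  · by_contra hlt
    have h1 := blockIdx_mono f (le_of_not_ge hlt)
    rw [hx, hx] at h1
    have h2 : (i : ℕ) ≤ j := hij
    have h3 : i = j := Fin.ext (by omega)
    exact hlt (h3 ▸ le_rfl)
  · rw [eq_parity_blockIdx f (hx1 _), hx]
    simp
  · rw [eq_parity_blockIdx f (hx1 _), eq_parity_blockIdx f (hx1 _), hx, hx]
    simp only [Fin.val_castSucc, Fin.val_succ, ne_eq, decide_eq_decide]
    omega

/-- Along a violating chain for the parity of a monotone `d`, the values of `d` start at `1` or
more and strictly increase, so the last one exceeds `k`. -/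
lemma kMonotoneOn_of_parity (d : ℕ → ℕ) (hd : Monotone d) (n k : ℕ) (hk : ∀ x ≤ n, d x ≤ k) :
    KMonotoneOn (fun x => decide (d x % 2 = 1)) k (Set.Icc 1 n) := by
  rintro ⟨x, hxS, hmono, h0, halt⟩
  have key : ∀ i : Fin (k + 1), (i : ℕ) + 1 ≤ d (x i) := by
    intro i
    induction i using Fin.induction with
    | zero =>
      have h1 : d (x 0) % 2 = 1 := by simpa using h0
      simp only [Fin.val_zero]
      omega
    | succ i ih =>
      have h1 : d (x i.castSucc) ≤ d (x i.succ) := hd (hmono i.castSucc_lt_succ.le)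
      have h2 : d (x i.castSucc) ≠ d (x i.succ) := fun h => halt i (by simp only [h])
      simp only [Fin.val_castSucc, Fin.val_succ] at ih ⊢
      omega
  have h1 := key (Fin.last k)
  have h2 := hk _ (hxS (Fin.last k)).2
  simp only [Fin.val_last] at h1
  omega

/-- Double counting: each label lies in at most `m` of the windows `(j, j + m]`. -/
lemma sum_card_window_le (c : ℕ → ℕ) (n m K : ℕ) :
    ∑ j ∈ Finset.range K, ((Finset.Icc 1 n).filter (fun x => j < c x ∧ c x ≤ j + m)).card
      ≤ n * m := by
  simp only [Finset.card_filter]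
  rw [Finset.sum_comm]
  simp only [← Finset.card_filter]
  have key : ∀ x ∈ Finset.Icc 1 n,
      ((Finset.range K).filter (fun j => j < c x ∧ c x ≤ j + m)).card ≤ m := by
    intro x _
    calc _ ≤ (Finset.Ico (c x - m) (c x)).card := Finset.card_le_card fun j hj => by
            simp only [Finset.mem_filter, Finset.mem_Ico] at hj ⊢
            omega
      _ ≤ m := by rw [Nat.card_Ico]; omega
  simpa using Finset.sum_le_card_nsmul _ _ _ key

/-- If `f : {1,…,n} → {0,1}` is `ε`-far from every `k`-monotone function, then `f` is not
`⌊(1 + ε/4)·k⌋`-monotone. -/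
theorem not_floor_kMonotone_of_far (n k : ℕ) (hn : 1 ≤ n) (hk : 1 ≤ k)
    (ε : ℝ) (hε : ε ∈ Set.Ioc (0 : ℝ) 1) (f : ℕ → Bool)
    (hfar : ∀ g : ℕ → Bool, KMonotoneOn g k (Set.Icc 1 n) →
      (ε * n : ℝ) ≤ ((Finset.Icc 1 n).filter (fun x => f x ≠ g x)).card) :
    ¬ KMonotoneOn f (⌊(1 + ε / 4) * k⌋₊) (Set.Icc 1 n) := by
  intro hmon
  obtain ⟨hε0, hε1⟩ := hε
  have hkR : (1 : ℝ) ≤ k := by exact_mod_cast hk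
  have hnR : (1 : ℝ) ≤ n := by exact_mod_cast hn
  have hkl : k ≤ ⌊(1 + ε / 4) * k⌋₊ := Nat.le_floor (by nlinarith)
  have hfl : ((⌊(1 + ε / 4) * k⌋₊ : ℕ) : ℝ) ≤ (1 + ε / 4) * k := Nat.floor_le (by positivity)
  obtain ⟨r, hr⟩ := Nat.exists_eq_add_of_le hkl
  rw [hr] at hmon hfl
  push_cast at hfl
  have hb : ∀ x ≤ n, blockIdx f x ≤ k + r := fun x hx =>
    (blockIdx_mono f hx).trans (not_lt.1 fun h => hmon (exists_chain f n _ h))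
  have hwin : ∀ j ∈ Finset.range (k + 1), (ε * n : ℝ) ≤ (((Finset.Icc 1 n).filter
      (fun x => j < blockIdx f x ∧ blockIdx f x ≤ j + 2 * r)).card : ℝ) := by
    intro j hj
    have hj' := Finset.mem_range.1 hj
    -- The collapsed labelling; truncated subtraction is harmless because of the outer `max`.
    let d : ℕ → ℕ := fun x => min (blockIdx f x) (max j (blockIdx f x - 2 * r))
    have hd : Monotone d := fun x y hxy => by
      have := blockIdx_mono f hxy
      simp only [d]
      omega
    refine (hfar _ (kMonotoneOn_of_parity d hd n k fun x hx => ?_)).trans ?_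
    · have := hb x hx
      simp only [d]
      omega
    · refine Nat.cast_le.2 (Finset.card_le_card fun x hx => ?_)
      simp only [Finset.mem_filter, Finset.mem_Icc] at hx ⊢
      refine ⟨hx.1, ?_⟩
      have h2 := hx.2
      rw [eq_parity_blockIdx f hx.1.1] at h2
      simp only [ne_eq, decide_eq_decide, d] at h2
      by_contra hw
      apply h2
      omega
  have hsum := Finset.card_nsmul_le_sum _ _ _ hwin
  have hub : ((∑ j ∈ Finset.range (k + 1), ((Finset.Icc 1 n).filter
      (fun x => j < blockIdx f x ∧ blockIdx f x ≤ j + 2 * r)).card : ℕ) : ℝ)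
      ≤ ((n * (2 * r) : ℕ) : ℝ) :=
    Nat.cast_le.2 (sum_card_window_le (blockIdx f) n (2 * r) (k + 1))
  push_cast at hub
  simp only [Finset.card_range, nsmul_eq_mul] at hsum
  push_cast at hsum
  have h1 : (n : ℝ) * ((k + 1) * ε) ≤ n * (2 * r) := by linarith
  have h2 : ((k : ℝ) + 1) * ε ≤ 2 * r := le_of_mul_le_mul_left h1 (by linarith)
  nlinarith [mul_pos hε0 (by linarith : (0 : ℝ) < k)]
end
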